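/- arXiv:1202.1660 — 16 statements merged into one kernel-verified Lean document; each statement's English description precedes it below -/
import Mathlib

section
/- Let n ≥ r ≥ 1, let κ be a real number with κ ≠ -1, and let X, V be real n×r matrices satisfying XᵀX = I_r and XᵀV + VᵀX = 0. Define P = V - ((1+2κ)/(2+2κ)) X XᵀV. Then XᵀP + PᵀX = 0 and V = P - (1+2κ) X PᵀX. (Forward direction of the Legendre transformation for the Jensen metric ds²_κ on the Stiefel variety.) -/
open Matrix

/-- Forward direction of the Legendre transformation for the
Jensen metric `ds²_κ` on the Stiefel variety `V(n,r)`. -/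
theorem stiefel_legendre_forward (n r : ℕ) (hr : 1 ≤ r) (hnr : r ≤ n)
    (κ : ℝ) (hκ : κ ≠ -1)
    (X V P : Matrix (Fin n) (Fin r) ℝ)
    (hX : Xᵀ * X = 1)
    (hV : Xᵀ * V + Vᵀ * X = 0)
    (hP : P = V - ((1 + 2 * κ) / (2 + 2 * κ)) • (X * (Xᵀ * V))) :
    Xᵀ * P + Pᵀ * X = 0 ∧ V = P - (1 + 2 * κ) • (X * (Pᵀ * X)) := by
  have h2 : (2 + 2 * κ) ≠ 0 := fun h => hκ (by linarith)
  have hVX : Vᵀ * X = -(Xᵀ * V) := eq_neg_of_add_eq_zero_right hV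
  have h1 : Xᵀ * P = (1 / (2 + 2 * κ)) • (Xᵀ * V) := by
    have hc : (1 / (2 + 2 * κ)) = 1 - (1 + 2 * κ) / (2 + 2 * κ) := by
      rw [eq_sub_iff_add_eq, ← add_div, div_eq_one_iff_eq h2]
      ring
    rw [hP, Matrix.mul_sub, Matrix.mul_smul, ← Matrix.mul_assoc Xᵀ X, hX, Matrix.one_mul,
      hc, sub_smul, one_smul]
  have h3 : Pᵀ * X = -((1 / (2 + 2 * κ)) • (Xᵀ * V)) := by
    have h4 : Pᵀ * X = (Xᵀ * P)ᵀ := by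
      rw [Matrix.transpose_mul, Matrix.transpose_transpose]
    rw [h4, h1, Matrix.transpose_smul, Matrix.transpose_mul, Matrix.transpose_transpose, hVX,
      smul_neg]
  refine ⟨by rw [h1, h3, add_neg_cancel], ?_⟩
  rw [h3, hP, Matrix.mul_neg, Matrix.mul_smul, smul_neg, smul_smul, mul_one_div]
  abel
end

section
/- Let n ≥ r ≥ 1, let κ be a real number with κ ≠ -1, and let X, P be real n×r matrices satisfying XᵀX = I_r and XᵀP + PᵀX = 0. Define V = P - (1+2κ) X PᵀX. Then XᵀV + VᵀX = 0 and P = V - ((1+2κ)/(2+2κ)) X XᵀV. (Inverse direction of the Legendre transformation for the Jensen metric ds²_κ on the Stiefel variety.) -/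
open Matrix

/-- Inverse direction of the Legendre transformation for the
Jensen metric `ds²_κ` on the Stiefel variety `V(n,r)`. -/
theorem stiefel_legendre_inverse (n r : ℕ) (hr : 1 ≤ r) (hnr : r ≤ n)
    (κ : ℝ) (hκ : κ ≠ -1)
    (X P V : Matrix (Fin n) (Fin r) ℝ)
    (hX : Xᵀ * X = 1)
    (hP : Xᵀ * P + Pᵀ * X = 0)
    (hV : V = P - (1 + 2 * κ) • (X * (Pᵀ * X))) :
    Xᵀ * V + Vᵀ * X = 0 ∧ P = V - ((1 + 2 * κ) / (2 + 2 * κ)) • (X * (Xᵀ * V)) := by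
  have h1 : Pᵀ * X = -(Xᵀ * P) := (neg_eq_of_add_eq_zero_right hP).symm
  have h2 : Xᵀ * V = (2 + 2 * κ) • (Xᵀ * P) := by
    rw [hV, Matrix.mul_sub, Matrix.mul_smul, ← Matrix.mul_assoc, hX, Matrix.one_mul, h1]
    module
  have h3 : Vᵀ * X = (2 + 2 * κ) • (Pᵀ * X) := by
    have h := congrArg Matrix.transpose h2
    simpa [Matrix.transpose_mul] using h
  have hne : (2 + 2 * κ) ≠ 0 := fun h => hκ (by linarith)
  constructor
  · rw [h2, h3, ← smul_add, hP, smul_zero]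
  · rw [h2, Matrix.mul_smul, smul_smul, div_mul_cancel₀ _ hne, hV, h1, Matrix.mul_neg]
    module
end

section
/- Let Γ be a constant real n×r matrix and κ ∈ ℝ. Suppose X, P : ℝ → M_{n,r}(ℝ) are differentiable curves which at time t satisfy the constraints XᵀX = I_r, XᵀP + PᵀX = 0, and the pendulum equations X' = P - (1+2κ)XPᵀX, P' = (1+2κ)PXᵀP - Γ + XΛ with Λ = ½(-2PᵀP + XᵀΓ + ΓᵀX). Then, setting Φ = PXᵀ - XPᵀ and Ψ = XᵀP - PᵀX, at time t one has X' = ΦX + κXΨ, Φ' = XΓᵀ - ΓXᵀ, and Ψ' = ΓᵀX - XᵀΓ. -/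
open Matrix

/-- Entrywise derivative of a matrix-valued curve. -/
def HasMatDerivAt {m k : Type*} {E : Type*} [NormedAddCommGroup E] [NormedSpace ℝ E]
    (F : ℝ → Matrix m k E) (F' : Matrix m k E) (t : ℝ) : Prop :=
  ∀ i j, HasDerivAt (fun s => F s i j) (F' i j) t

theorem HasMatDerivAt.mul_aux {m k l : Type*} [Fintype k]
    {F : ℝ → Matrix m k ℝ} {F' : Matrix m k ℝ} {G : ℝ → Matrix k l ℝ} {G' : Matrix k l ℝ} {t : ℝ}
    (hF : HasMatDerivAt F F' t) (hG : HasMatDerivAt G G' t) :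
    HasMatDerivAt (fun s => F s * G s) (F' * G t + F t * G') t := by
  intro i j
  simp only [Matrix.mul_apply, Matrix.add_apply, ← Finset.sum_add_distrib]
  exact HasDerivAt.fun_sum fun x _ => (hF i x).mul (hG x j)

theorem HasMatDerivAt.sub_aux {m k : Type*}
    {F G : ℝ → Matrix m k ℝ} {F' G' : Matrix m k ℝ} {t : ℝ}
    (hF : HasMatDerivAt F F' t) (hG : HasMatDerivAt G G' t) :
    HasMatDerivAt (fun s => F s - G s) (F' - G') t :=
  fun i j => (hF i j).sub (hG i j)

theorem HasMatDerivAt.transpose_aux {m k : Type*}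
    {F : ℝ → Matrix m k ℝ} {F' : Matrix m k ℝ} {t : ℝ}
    (hF : HasMatDerivAt F F' t) : HasMatDerivAt (fun s => (F s)ᵀ) F'ᵀ t :=
  fun i j => hF j i

/-- Along the pendulum flow on `V(n,r)`, with `Φ = PXᵀ - XPᵀ` and
`Ψ = XᵀP - PᵀX`, one has `X' = ΦX + κXΨ`, `Φ' = XΓᵀ - ΓXᵀ`, `Ψ' = ΓᵀX - XᵀΓ`. -/
theorem pendulum_momentum_form (n r : ℕ)
    (Γ : Matrix (Fin n) (Fin r) ℝ) (κ : ℝ)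
    (X P : ℝ → Matrix (Fin n) (Fin r) ℝ)
    (X' P' : Matrix (Fin n) (Fin r) ℝ) (t : ℝ)
    (hX : HasMatDerivAt X X' t) (hP : HasMatDerivAt P P' t)
    (hc1 : (X t)ᵀ * X t = 1)
    (hc2 : (X t)ᵀ * P t + (P t)ᵀ * X t = 0)
    (Λ : Matrix (Fin r) (Fin r) ℝ)
    (hΛ : Λ = (1 / 2 : ℝ) • (-(2 : ℝ) • ((P t)ᵀ * P t) + (X t)ᵀ * Γ + Γᵀ * X t))
    (heqX : X' = P t - (1 + 2 * κ) • (X t * ((P t)ᵀ * X t)))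
    (heqP : P' = (1 + 2 * κ) • (P t * ((X t)ᵀ * P t)) - Γ + X t * Λ) :
    X' = (P t * (X t)ᵀ - X t * (P t)ᵀ) * X t
        + κ • (X t * ((X t)ᵀ * P t - (P t)ᵀ * X t)) ∧
      HasMatDerivAt (fun s => P s * (X s)ᵀ - X s * (P s)ᵀ)
        (X t * Γᵀ - Γ * (X t)ᵀ) t ∧
      HasMatDerivAt (fun s => (X s)ᵀ * P s - (P s)ᵀ * X s)
        (Γᵀ * X t - (X t)ᵀ * Γ) t := by
  have hA : (X t)ᵀ * P t = -((P t)ᵀ * X t) := eq_neg_of_add_eq_zero_left hc2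
  have hΛs : Λᵀ = Λ := by
    rw [hΛ]
    simp only [transpose_smul, transpose_add, transpose_mul, transpose_transpose]
    congr 1
    abel
  refine ⟨?_, ?_, ?_⟩
  · rw [heqX, hA, Matrix.sub_mul, Matrix.mul_assoc, hc1, Matrix.mul_assoc, Matrix.mul_one,
      Matrix.mul_sub, Matrix.mul_neg]
    module
  · have h := (hP.mul_aux hX.transpose_aux).sub_aux (hX.mul_aux hP.transpose_aux)
    convert h using 1
    rw [heqX, heqP]
    simp only [transpose_smul, transpose_add, transpose_sub, transpose_mul, transpose_transpose,
      hΛs, Matrix.add_mul, Matrix.sub_mul, Matrix.mul_add, Matrix.mul_sub, Matrix.mul_smul,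
      Matrix.smul_mul, Matrix.mul_assoc]
    module
  · have h := (hX.transpose_aux.mul_aux hP).sub_aux (hP.transpose_aux.mul_aux hX)
    convert h using 1
    have h1 : (X t)ᵀ * (X t * Λ) = Λ := by rw [← Matrix.mul_assoc, hc1, Matrix.one_mul]
    rw [heqX, heqP]
    simp only [transpose_smul, transpose_add, transpose_sub, transpose_mul, transpose_transpose,
      hΛs, Matrix.add_mul, Matrix.sub_mul, Matrix.mul_add, Matrix.mul_sub, Matrix.mul_smul,
      Matrix.smul_mul, Matrix.mul_assoc, h1, hc1, Matrix.mul_one]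
    module
end

section
/- Let Γ be a fixed real n×r matrix, and let X : ℝ → M_{n,r}(ℝ), Φ : ℝ → so(n), Ψ : ℝ → so(r) be differentiable curves. For λ ∈ ℝ define the (n+r)×(n+r) matrices L(λ) with blocks (-λΦ, X+λ²Γ; -Xᵀ-λ²Γᵀ, λΨ) and A(λ) with blocks (-Φ, λΓ; -λΓᵀ, Ψ). Then d/dt L(λ) = [L(λ), A(λ)] holds at time t for every λ ∈ ℝ if and only if at time t one has X' = ΦX + XΨ, Φ' = XΓᵀ - ΓXᵀ, and Ψ' = ΓᵀX - XᵀΓ. (Lax representation of the V(n,r)-pendulum for κ = 1.) -/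
open Matrix

/-- The Lax matrix `L(λ)` of the `V(n,r)`-pendulum for `κ = 1`. -/
def pendulumLax {n r : ℕ} (Γ X : Matrix (Fin n) (Fin r) ℝ)
    (Φ : Matrix (Fin n) (Fin n) ℝ) (Ψ : Matrix (Fin r) (Fin r) ℝ) (lam : ℝ) :
    Matrix (Fin n ⊕ Fin r) (Fin n ⊕ Fin r) ℝ :=
  fromBlocks (-(lam • Φ)) (X + (lam ^ 2) • Γ) (-(Xᵀ + (lam ^ 2) • Γᵀ)) (lam • Ψ)

/-- The matrix `A(λ)` of the Lax pair of the `V(n,r)`-pendulum for `κ = 1`. -/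
def pendulumLaxA {n r : ℕ} (Γ : Matrix (Fin n) (Fin r) ℝ)
    (Φ : Matrix (Fin n) (Fin n) ℝ) (Ψ : Matrix (Fin r) (Fin r) ℝ) (lam : ℝ) :
    Matrix (Fin n ⊕ Fin r) (Fin n ⊕ Fin r) ℝ :=
  fromBlocks (-Φ) (lam • Γ) (-(lam • Γᵀ)) Ψ

theorem pendulum_comm {n r : ℕ} (Γ X : Matrix (Fin n) (Fin r) ℝ)
    (Φ : Matrix (Fin n) (Fin n) ℝ) (Ψ : Matrix (Fin r) (Fin r) ℝ) (lam : ℝ) :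
    pendulumLax Γ X Φ Ψ lam * pendulumLaxA Γ Φ Ψ lam
      - pendulumLaxA Γ Φ Ψ lam * pendulumLax Γ X Φ Ψ lam
    = fromBlocks (-(lam • (X * Γᵀ - Γ * Xᵀ))) (Φ * X + X * Ψ) (Xᵀ * Φ + Ψ * Xᵀ)
        (lam • (Γᵀ * X - Xᵀ * Γ)) := by
  unfold pendulumLax pendulumLaxA
  rw [fromBlocks_multiply, fromBlocks_multiply, sub_eq_add_neg, fromBlocks_neg, fromBlocks_add]
  congr 1 <;>
  · simp only [Matrix.mul_add, Matrix.add_mul, Matrix.mul_neg, Matrix.neg_mul, Matrix.smul_mul,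
      Matrix.mul_smul, smul_add, smul_sub, smul_neg, smul_smul]
    module

theorem pendulum_deriv {n r : ℕ} (Γ : Matrix (Fin n) (Fin r) ℝ)
    (X : ℝ → Matrix (Fin n) (Fin r) ℝ)
    (Φ : ℝ → Matrix (Fin n) (Fin n) ℝ) (Ψ : ℝ → Matrix (Fin r) (Fin r) ℝ)
    (X' : Matrix (Fin n) (Fin r) ℝ) (Φ' : Matrix (Fin n) (Fin n) ℝ)
    (Ψ' : Matrix (Fin r) (Fin r) ℝ) (t : ℝ)
    (hX : HasMatDerivAt X X' t) (hΦ : HasMatDerivAt Φ Φ' t)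
    (hΨ : HasMatDerivAt Ψ Ψ' t) (lam : ℝ) :
    HasMatDerivAt (fun s => pendulumLax Γ (X s) (Φ s) (Ψ s) lam)
      (fromBlocks (-(lam • Φ')) X' (-X'ᵀ) (lam • Ψ')) t := by
  rintro (i | i) (j | j)
  · exact ((hΦ i j).const_mul lam).neg
  · exact (hX i j).add_const _
  · exact ((hX j i).add_const _).neg
  · exact (hΨ i j).const_mul lam

/-- Lax representation of the `V(n,r)`-pendulum for `κ = 1`:
`d/dt L(λ) = [L(λ), A(λ)]` for all `λ` iff `X' = ΦX + XΨ`, `Φ' = XΓᵀ - ΓXᵀ`,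
`Ψ' = ΓᵀX - XᵀΓ`. -/
theorem pendulum_lax_representation (n r : ℕ)
    (Γ : Matrix (Fin n) (Fin r) ℝ)
    (X : ℝ → Matrix (Fin n) (Fin r) ℝ)
    (Φ : ℝ → Matrix (Fin n) (Fin n) ℝ) (Ψ : ℝ → Matrix (Fin r) (Fin r) ℝ)
    (hΦskew : ∀ s, (Φ s)ᵀ = -Φ s) (hΨskew : ∀ s, (Ψ s)ᵀ = -Ψ s)
    (X' : Matrix (Fin n) (Fin r) ℝ) (Φ' : Matrix (Fin n) (Fin n) ℝ)
    (Ψ' : Matrix (Fin r) (Fin r) ℝ) (t : ℝ)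
    (hX : HasMatDerivAt X X' t) (hΦ : HasMatDerivAt Φ Φ' t)
    (hΨ : HasMatDerivAt Ψ Ψ' t) :
    (∀ lam : ℝ,
        HasMatDerivAt (fun s => pendulumLax Γ (X s) (Φ s) (Ψ s) lam)
          (pendulumLax Γ (X t) (Φ t) (Ψ t) lam * pendulumLaxA Γ (Φ t) (Ψ t) lam
            - pendulumLaxA Γ (Φ t) (Ψ t) lam * pendulumLax Γ (X t) (Φ t) (Ψ t) lam)
          t)
      ↔ (X' = Φ t * X t + X t * Ψ t ∧ Φ' = X t * Γᵀ - Γ * (X t)ᵀ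
          ∧ Ψ' = Γᵀ * X t - (X t)ᵀ * Γ) := by
  constructor
  · intro h
    have key := Matrix.ext fun i j =>
      (pendulum_deriv Γ X Φ Ψ X' Φ' Ψ' t hX hΦ hΨ 1 i j).unique (h 1 i j)
    rw [pendulum_comm, fromBlocks_inj] at key
    obtain ⟨h1, h2, -, h4⟩ := key
    simp only [one_smul] at h1 h4
    exact ⟨h2, neg_injective h1, h4⟩
  · rintro ⟨h1, h2, h3⟩ lam
    have key := pendulum_deriv Γ X Φ Ψ X' Φ' Ψ' t hX hΦ hΨ lam
    have h4 : -X'ᵀ = (X t)ᵀ * Φ t + Ψ t * (X t)ᵀ := by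
      rw [h1, transpose_add, transpose_mul, transpose_mul, hΦskew, hΨskew]
      simp only [Matrix.mul_neg, Matrix.neg_mul]
      abel
    rw [pendulum_comm, ← h1, ← h2, ← h3, ← h4]
    exact key
end

section
/- Let κ ∈ ℝ, and let X : ℝ → M_{n,r}(ℝ), Φ : ℝ → so(n), Ψ : ℝ → so(r) be differentiable curves. For λ ∈ ℝ define the (n+r)×(n+r) matrices L(λ) with blocks (-λΦ, X; -Xᵀ, λκΨ) and A(λ) with blocks (-Φ, 0; 0, κΨ). Then d/dt L(λ) = [L(λ), A(λ)] holds at time t for every λ ∈ ℝ if and only if at time t one has X' = ΦX + κXΨ, Φ' = 0, and κΨ' = 0. (Lax representation of the geodesic flow of the Jensen metric ds²_κ, i.e., the case Γ = 0.) -/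
open Matrix

/-- The Lax matrix `L(λ)` of the geodesic flow of the Jensen metric `ds²_κ`. -/
def geodesicLax {n r : ℕ} (κ : ℝ) (X : Matrix (Fin n) (Fin r) ℝ)
    (Φ : Matrix (Fin n) (Fin n) ℝ) (Ψ : Matrix (Fin r) (Fin r) ℝ) (lam : ℝ) :
    Matrix (Fin n ⊕ Fin r) (Fin n ⊕ Fin r) ℝ :=
  fromBlocks (-(lam • Φ)) X (-Xᵀ) ((lam * κ) • Ψ)

/-- The matrix `A(λ)` of the Lax pair of the geodesic flow of `ds²_κ`. -/
def geodesicLaxA {n r : ℕ} (κ : ℝ)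
    (Φ : Matrix (Fin n) (Fin n) ℝ) (Ψ : Matrix (Fin r) (Fin r) ℝ) :
    Matrix (Fin n ⊕ Fin r) (Fin n ⊕ Fin r) ℝ :=
  fromBlocks (-Φ) 0 0 (κ • Ψ)

theorem lax_commutator {n r : ℕ} (κ lam : ℝ) (X : Matrix (Fin n) (Fin r) ℝ)
    (Φ : Matrix (Fin n) (Fin n) ℝ) (Ψ : Matrix (Fin r) (Fin r) ℝ)
    (hΦ : Φᵀ = -Φ) (hΨ : Ψᵀ = -Ψ) :
    geodesicLax κ X Φ Ψ lam * geodesicLaxA κ Φ Ψ - geodesicLaxA κ Φ Ψ * geodesicLax κ X Φ Ψ lam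
      = fromBlocks 0 (Φ * X + κ • (X * Ψ)) (-(Φ * X + κ • (X * Ψ))ᵀ) 0 := by
  unfold geodesicLax geodesicLaxA
  rw [fromBlocks_multiply, fromBlocks_multiply, sub_eq_add_neg, fromBlocks_neg, fromBlocks_add]
  congr 1
  · simp
  · simp [add_comm]
  · simp [hΦ, hΨ, Matrix.transpose_mul, add_comm]
  · simp [smul_smul, mul_comm]

theorem lax_hasMatDerivAt {n r : ℕ} (κ lam : ℝ)
    (X : ℝ → Matrix (Fin n) (Fin r) ℝ)
    (Φ : ℝ → Matrix (Fin n) (Fin n) ℝ) (Ψ : ℝ → Matrix (Fin r) (Fin r) ℝ)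
    (X' : Matrix (Fin n) (Fin r) ℝ) (Φ' : Matrix (Fin n) (Fin n) ℝ)
    (Ψ' : Matrix (Fin r) (Fin r) ℝ) (t : ℝ)
    (hX : HasMatDerivAt X X' t) (hΦ : HasMatDerivAt Φ Φ' t)
    (hΨ : HasMatDerivAt Ψ Ψ' t) :
    HasMatDerivAt (fun s => geodesicLax κ (X s) (Φ s) (Ψ s) lam)
      (geodesicLax κ X' Φ' Ψ' lam) t := by
  rintro (i | i) (j | j)
  · exact ((hΦ i j).const_mul lam).neg
  · exact hX i j
  · exact (hX j i).neg
  · exact (hΨ i j).const_mul (lam * κ)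

/-- Lax representation of the geodesic flow of the Jensen metric
`ds²_κ` (the case `Γ = 0`): `d/dt L(λ) = [L(λ), A(λ)]` for all `λ` iff
`X' = ΦX + κXΨ`, `Φ' = 0`, `κΨ' = 0`. -/
theorem geodesic_lax_representation (n r : ℕ) (κ : ℝ)
    (X : ℝ → Matrix (Fin n) (Fin r) ℝ)
    (Φ : ℝ → Matrix (Fin n) (Fin n) ℝ) (Ψ : ℝ → Matrix (Fin r) (Fin r) ℝ)
    (hΦskew : ∀ s, (Φ s)ᵀ = -Φ s) (hΨskew : ∀ s, (Ψ s)ᵀ = -Ψ s)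
    (X' : Matrix (Fin n) (Fin r) ℝ) (Φ' : Matrix (Fin n) (Fin n) ℝ)
    (Ψ' : Matrix (Fin r) (Fin r) ℝ) (t : ℝ)
    (hX : HasMatDerivAt X X' t) (hΦ : HasMatDerivAt Φ Φ' t)
    (hΨ : HasMatDerivAt Ψ Ψ' t) :
    (∀ lam : ℝ,
        HasMatDerivAt (fun s => geodesicLax κ (X s) (Φ s) (Ψ s) lam)
          (geodesicLax κ (X t) (Φ t) (Ψ t) lam * geodesicLaxA κ (Φ t) (Ψ t)
            - geodesicLaxA κ (Φ t) (Ψ t) * geodesicLax κ (X t) (Φ t) (Ψ t) lam)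
          t)
      ↔ (X' = Φ t * X t + κ • (X t * Ψ t) ∧ Φ' = 0 ∧ κ • Ψ' = 0) := by
  have key : ∀ lam : ℝ, HasMatDerivAt (fun s => geodesicLax κ (X s) (Φ s) (Ψ s) lam)
      (geodesicLax κ X' Φ' Ψ' lam) t := fun lam =>
    lax_hasMatDerivAt κ lam X Φ Ψ X' Φ' Ψ' t hX hΦ hΨ
  constructor
  · intro h
    have e := Matrix.ext fun i j => (key 1 i j).unique (h 1 i j)
    rw [lax_commutator κ 1 _ _ _ (hΦskew t) (hΨskew t), geodesicLax, fromBlocks_inj] at e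
    obtain ⟨h1, h2, -, h4⟩ := e
    exact ⟨h2, by simpa using h1, by rwa [one_mul] at h4⟩
  · rintro ⟨h1, h2, h3⟩ lam
    rw [lax_commutator κ lam _ _ _ (hΦskew t) (hΨskew t)]
    have e := key lam
    have e2 : geodesicLax κ X' Φ' Ψ' lam = fromBlocks 0 X' (-X'ᵀ) 0 := by
      rw [geodesicLax, mul_smul, h3, h2, smul_zero, smul_zero, neg_zero]
    rw [e2] at e
    rw [← h1]
    exact e
end

section
/- Let a ∈ ℝʳ, α ∈ ℝⁿ, and set Γ = α aᵀ (the n×r matrix whose i-th column is aᵢα). Suppose X : ℝ → M_{n,r}(ℝ) and Φ : ℝ → so(n) are differentiable and at time t satisfy X' = ΦX and Φ' = XΓᵀ - ΓXᵀ. Then the curve x = Xa = a₁e₁ + ... + a_re_r (where e₁,...,e_r are the columns of X) satisfies at time t: x' = Φx and Φ' = x∧α. -/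
open Matrix

/-- Entrywise derivative of a vector-valued curve. -/
def HasVecDerivAt {m : Type*} (f : ℝ → m → ℝ) (f' : m → ℝ) (t : ℝ) : Prop :=
  ∀ i, HasDerivAt (fun s => f s i) (f' i) t

/-- The wedge `u∧v = uvᵀ - vuᵀ` of two vectors in `ℝⁿ`. -/
def wedge {n : ℕ} (u v : Fin n → ℝ) : Matrix (Fin n) (Fin n) ℝ :=
  vecMulVec u v - vecMulVec v u

/-- For `Γ = αaᵀ`, the equations `X' = ΦX`, `Φ' = XΓᵀ - ΓXᵀ` imply
that `x = Xa` satisfies `x' = Φx` and `Φ' = x∧α`. -/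
theorem pendulum_reduced_equations (n r : ℕ)
    (a : Fin r → ℝ) (α : Fin n → ℝ)
    (Γ : Matrix (Fin n) (Fin r) ℝ) (hΓ : Γ = vecMulVec α a)
    (X : ℝ → Matrix (Fin n) (Fin r) ℝ) (Φ : ℝ → Matrix (Fin n) (Fin n) ℝ)
    (hΦskew : ∀ s, (Φ s)ᵀ = -Φ s)
    (X' : Matrix (Fin n) (Fin r) ℝ) (Φ' : Matrix (Fin n) (Fin n) ℝ) (t : ℝ)
    (hX : HasMatDerivAt X X' t) (hΦ : HasMatDerivAt Φ Φ' t)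
    (heqX : X' = Φ t * X t) (heqΦ : Φ' = X t * Γᵀ - Γ * (X t)ᵀ) :
    HasVecDerivAt (fun s => (X s).mulVec a) ((Φ t).mulVec ((X t).mulVec a)) t ∧
      Φ' = wedge ((X t).mulVec a) α := by
  subst hΓ heqX heqΦ
  refine ⟨fun i => ?_, ?_⟩
  · rw [Matrix.mulVec_mulVec]
    have h := HasDerivAt.fun_sum (u := Finset.univ) (fun j _ => (hX i j).mul_const (a j))
    exact h
  · ext i j
    simp only [wedge, Matrix.sub_apply, Matrix.mul_apply, Matrix.transpose_apply, vecMulVec_apply,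
      Matrix.mulVec, dotProduct, Finset.sum_mul, Finset.mul_sum]
    congr 1 <;> exact Finset.sum_congr rfl fun k _ => by ring
end

section
/- Let α ∈ ℝⁿ, x : ℝ → ℝⁿ, and Φ : ℝ → so(n) be differentiable curves satisfying at time t the equations x' = Φx and Φ' = x∧α. For λ ∈ ℝ define the (n+1)×(n+1) matrices L̃(λ) with blocks (-λΦ, x+λ²α; -(x+λ²α)ᵀ, 0) and Ã(λ) with blocks (-Φ, λα; -λαᵀ, 0). Then d/dt L̃(λ) = [L̃(λ), Ã(λ)] holds at time t for every λ ∈ ℝ. (Lax representation of the SO(n-1)-invariant V(n,r)-pendulum with the normal metric, κ = 0.) -/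
open Matrix

/-- The Lax matrix `L̃(λ)` of the `SO(n-1)`-invariant pendulum (κ = 0):
blocks `(-λΦ, x + λ²α; -(x + λ²α)ᵀ, 0)`. -/
def reducedLax {n : ℕ} (α x : Fin n → ℝ) (Φ : Matrix (Fin n) (Fin n) ℝ) (lam : ℝ) :
    Matrix (Fin n ⊕ Unit) (Fin n ⊕ Unit) ℝ :=
  fromBlocks (-(lam • Φ)) (Matrix.of fun i (_ : Unit) => x i + lam ^ 2 * α i)
    (Matrix.of fun (_ : Unit) j => -(x j + lam ^ 2 * α j)) 0

/-- The matrix `Ã(λ)` of the Lax pair: blocks `(-Φ, λα; -λαᵀ, 0)`. -/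
def reducedLaxA {n : ℕ} (α : Fin n → ℝ) (Φ : Matrix (Fin n) (Fin n) ℝ) (lam : ℝ) :
    Matrix (Fin n ⊕ Unit) (Fin n ⊕ Unit) ℝ :=
  fromBlocks (-Φ) (Matrix.of fun i (_ : Unit) => lam * α i)
    (Matrix.of fun (_ : Unit) j => -(lam * α j)) 0

/-- the equations `x' = Φx`, `Φ' = x∧α` imply the Lax equation
`d/dt L̃(λ) = [L̃(λ), Ã(λ)]` for every `λ ∈ ℝ`. -/
theorem reduced_pendulum_lax (n : ℕ) (α : Fin n → ℝ)
    (x : ℝ → Fin n → ℝ) (Φ : ℝ → Matrix (Fin n) (Fin n) ℝ)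
    (hΦskew : ∀ s, (Φ s)ᵀ = -Φ s)
    (x' : Fin n → ℝ) (Φ' : Matrix (Fin n) (Fin n) ℝ) (t : ℝ)
    (hx : HasVecDerivAt x x' t) (hΦ : HasMatDerivAt Φ Φ' t)
    (heqx : x' = (Φ t).mulVec (x t)) (heqΦ : Φ' = wedge (x t) α) :
    ∀ lam : ℝ,
      HasMatDerivAt (fun s => reducedLax α (x s) (Φ s) lam)
        (reducedLax α (x t) (Φ t) lam * reducedLaxA α (Φ t) lam
          - reducedLaxA α (Φ t) lam * reducedLax α (x t) (Φ t) lam) t := by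
  intro lam i j
  subst heqx heqΦ
  rcases i with i | i <;> rcases j with j | j
  · have h := ((hΦ i j).const_mul lam).fun_neg
    refine HasDerivAt.congr_deriv h ?_
    simp only [reducedLax, reducedLaxA, fromBlocks_multiply, Matrix.sub_apply, fromBlocks_apply₁₁]
    simp [wedge, vecMulVec_apply, Matrix.mul_apply]
    ring
  · have h := (hx i).add_const (lam ^ 2 * α i)
    refine HasDerivAt.congr_deriv h ?_
    simp only [reducedLax, reducedLaxA, fromBlocks_multiply, Matrix.sub_apply, fromBlocks_apply₁₂]
    simp only [Matrix.add_apply, Matrix.mul_apply, mulVec, dotProduct, Matrix.neg_apply, Matrix.smul_apply, of_apply,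
      Matrix.zero_apply, mul_zero, Finset.sum_const_zero, add_zero, smul_eq_mul]
    rw [← Finset.sum_sub_distrib]
    exact Finset.sum_congr rfl fun k _ => by ring
  · have h := ((hx j).add_const (lam ^ 2 * α j)).fun_neg
    refine HasDerivAt.congr_deriv h ?_
    simp only [reducedLax, reducedLaxA, fromBlocks_multiply, Matrix.sub_apply, fromBlocks_apply₂₁]
    simp only [Matrix.add_apply, Matrix.mul_apply, mulVec, dotProduct, Matrix.neg_apply, Matrix.smul_apply, of_apply,
      Matrix.zero_apply, zero_mul, Finset.sum_const_zero, add_zero, smul_eq_mul]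
    rw [← Finset.sum_sub_distrib, ← Finset.sum_neg_distrib]
    refine Finset.sum_congr rfl fun k _ => ?_
    have hk : Φ t k j = -Φ t j k := congrFun (congrFun (hΦskew t) j) k
    rw [hk]
    ring
  · have h := hasDerivAt_const t (0 : ℝ)
    refine HasDerivAt.congr_deriv h ?_
    simp only [reducedLax, reducedLaxA, fromBlocks_multiply, Matrix.sub_apply, fromBlocks_apply₂₂]
    simp only [Matrix.add_apply, Matrix.mul_apply, of_apply,
      Matrix.zero_apply, mul_zero, Finset.sum_const_zero, add_zero]
    rw [← Finset.sum_sub_distrib]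
    exact (Finset.sum_eq_zero fun k _ => by ring).symm
end

section
/- Let α ∈ ℝⁿ with ⟨α,α⟩ = 1, and let x : ℝ → ℝⁿ and Φ : ℝ → M_n(ℝ) be differentiable curves such that at time t one has Φ' = x∧α. Then the truncated momentum map Φ_α = Φ - (Φα)∧α satisfies dΦ_α/dt = 0 at time t. (The components of Φ_α are Noether integrals of the SO(n-1)-invariant pendulum.) -/
open Matrix

/-- If `α` is a unit vector and `Φ' = x∧α` at time `t`, then the
truncated momentum map `Φ_α = Φ - (Φα)∧α` is conserved: `dΦ_α/dt = 0` at `t`. -/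
theorem noether_truncated_momentum (n : ℕ) (α : Fin n → ℝ)
    (hα : α ⬝ᵥ α = 1)
    (x : ℝ → Fin n → ℝ) (Φ : ℝ → Matrix (Fin n) (Fin n) ℝ) (t : ℝ)
    (hΦ : HasMatDerivAt Φ (wedge (x t) α) t) :
    HasMatDerivAt (fun s => Φ s - wedge ((Φ s).mulVec α) α) 0 t := by
  have hv : ∀ i, HasDerivAt (fun s => (Φ s).mulVec α i) (x t i - α i * (x t ⬝ᵥ α)) t := by
    intro i
    have h : HasDerivAt (fun s => ∑ j, Φ s i j * α j) (∑ j, wedge (x t) α i j * α j) t :=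
      HasDerivAt.fun_sum fun j _ => (hΦ i j).mul_const (α j)
    have e : ∑ j, wedge (x t) α i j * α j = x t i - α i * (x t ⬝ᵥ α) := by
      have h1 : x t i = x t i * (α ⬝ᵥ α) := by rw [hα, mul_one]
      rw [h1]
      simp only [wedge, dotProduct, Finset.mul_sum, ← Finset.sum_sub_distrib,
        Matrix.sub_apply, vecMulVec_apply]
      exact Finset.sum_congr rfl fun j _ => by ring
    rw [e] at h
    exact h
  intro i j
  have h := (hΦ i j).sub (((hv i).mul_const (α j)).sub ((hv j).const_mul (α i)))
  refine h.congr_deriv ?_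
  simp only [wedge, Matrix.sub_apply, vecMulVec_apply, Matrix.zero_apply]
  ring
end

section
/- Let Ξ be a real skew-symmetric n×n matrix and κ ∈ ℝ. Suppose e₁, e₂, p₁, p₂ : ℝ → ℝⁿ are differentiable curves which at time t satisfy the constraints ⟨e₁,e₁⟩ = ⟨e₂,e₂⟩ = 1, ⟨e₁,e₂⟩ = ⟨e₁,p₁⟩ = ⟨e₂,p₂⟩ = 0, ⟨e₁,p₂⟩ + ⟨e₂,p₁⟩ = 0, together with the equations e₁' = p₁ - (1+2κ)⟨e₁,p₂⟩e₂, e₂' = p₂ - (1+2κ)⟨e₂,p₁⟩e₁, p₁' = Ξe₂ + (1+2κ)⟨p₁,e₂⟩p₂ + λ₁₁e₁ + λ₁₂e₂, p₂' = -Ξe₁ + (1+2κ)⟨p₂,e₁⟩p₁ + λ₂₁e₁ + λ₂₂e₂, where λ₁₁ = -⟨p₁,p₁⟩ - ⟨e₁,Ξe₂⟩, λ₁₂ = λ₂₁ = -⟨p₁,p₂⟩, λ₂₂ = -⟨p₂,p₂⟩ - ⟨e₁,Ξe₂⟩. Then at time t the derivatives of all six constraint functions ⟨e₁,e₁⟩-1,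 ⟨e₂,e₂⟩-1, ⟨e₁,e₂⟩, ⟨e₁,p₁⟩, ⟨e₂,p₂⟩, ⟨e₁,p₂⟩+⟨e₂,p₁⟩ vanish. -/
open Matrix

theorem hasDerivAt_dot_aux {n : ℕ} {f g : ℝ → Fin n → ℝ} {f' g' : Fin n → ℝ} {t : ℝ}
    (hf : HasVecDerivAt f f' t) (hg : HasVecDerivAt g g' t) :
    HasDerivAt (fun s => f s ⬝ᵥ g s) (f' ⬝ᵥ g t + f t ⬝ᵥ g') t := by
  have h := HasDerivAt.fun_sum (u := Finset.univ) (fun i _ => (hf i).fun_mul (hg i))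
  simp only [dotProduct, ← Finset.sum_add_distrib]
  exact h

theorem skew_dot_aux {n : ℕ} {Ξ : Matrix (Fin n) (Fin n) ℝ} (hΞ : Ξᵀ = -Ξ)
    (x y : Fin n → ℝ) : x ⬝ᵥ Ξ.mulVec y = -(y ⬝ᵥ Ξ.mulVec x) := by
  rw [dotProduct_mulVec, ← mulVec_transpose, hΞ, neg_mulVec, neg_dotProduct, dotProduct_comm]

/-- The Lagrange multipliers of the `V(n,2)`-pendulum make its flow
tangent to the constraint variety: along the flow, the derivatives of all six
constraint functions vanish. -/
theorem v_n2_pendulum_constraints_preserved (n : ℕ)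
    (Ξ : Matrix (Fin n) (Fin n) ℝ) (hΞ : Ξᵀ = -Ξ) (κ : ℝ)
    (e₁ e₂ p₁ p₂ : ℝ → Fin n → ℝ)
    (e₁' e₂' p₁' p₂' : Fin n → ℝ) (t : ℝ)
    (he₁ : HasVecDerivAt e₁ e₁' t) (he₂ : HasVecDerivAt e₂ e₂' t)
    (hp₁ : HasVecDerivAt p₁ p₁' t) (hp₂ : HasVecDerivAt p₂ p₂' t)
    (c₁ : e₁ t ⬝ᵥ e₁ t = 1) (c₂ : e₂ t ⬝ᵥ e₂ t = 1)
    (c₃ : e₁ t ⬝ᵥ e₂ t = 0) (c₄ : e₁ t ⬝ᵥ p₁ t = 0) (c₅ : e₂ t ⬝ᵥ p₂ t = 0)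
    (c₆ : e₁ t ⬝ᵥ p₂ t + e₂ t ⬝ᵥ p₁ t = 0)
    (l₁₁ l₁₂ l₂₁ l₂₂ : ℝ)
    (hl₁₁ : l₁₁ = -(p₁ t ⬝ᵥ p₁ t) - e₁ t ⬝ᵥ Ξ.mulVec (e₂ t))
    (hl₁₂ : l₁₂ = -(p₁ t ⬝ᵥ p₂ t)) (hl₂₁ : l₂₁ = -(p₁ t ⬝ᵥ p₂ t))
    (hl₂₂ : l₂₂ = -(p₂ t ⬝ᵥ p₂ t) - e₁ t ⬝ᵥ Ξ.mulVec (e₂ t))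
    (heq₁ : e₁' = p₁ t - ((1 + 2 * κ) * (e₁ t ⬝ᵥ p₂ t)) • e₂ t)
    (heq₂ : e₂' = p₂ t - ((1 + 2 * κ) * (e₂ t ⬝ᵥ p₁ t)) • e₁ t)
    (heq₃ : p₁' = Ξ.mulVec (e₂ t) + ((1 + 2 * κ) * (p₁ t ⬝ᵥ e₂ t)) • p₂ t
        + l₁₁ • e₁ t + l₁₂ • e₂ t)
    (heq₄ : p₂' = -Ξ.mulVec (e₁ t) + ((1 + 2 * κ) * (p₂ t ⬝ᵥ e₁ t)) • p₁ t
        + l₂₁ • e₁ t + l₂₂ • e₂ t) :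
    HasDerivAt (fun s => e₁ s ⬝ᵥ e₁ s - 1) 0 t ∧
    HasDerivAt (fun s => e₂ s ⬝ᵥ e₂ s - 1) 0 t ∧
    HasDerivAt (fun s => e₁ s ⬝ᵥ e₂ s) 0 t ∧
    HasDerivAt (fun s => e₁ s ⬝ᵥ p₁ s) 0 t ∧
    HasDerivAt (fun s => e₂ s ⬝ᵥ p₂ s) 0 t ∧
    HasDerivAt (fun s => e₁ s ⬝ᵥ p₂ s + e₂ s ⬝ᵥ p₁ s) 0 t := by
  have s12 := skew_dot_aux hΞ (e₂ t) (e₁ t)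
  have s11 := skew_dot_aux hΞ (e₁ t) (e₁ t)
  have s22 := skew_dot_aux hΞ (e₂ t) (e₂ t)
  have c₃' : e₂ t ⬝ᵥ e₁ t = 0 := by rw [dotProduct_comm, c₃]
  have c₄' : p₁ t ⬝ᵥ e₁ t = 0 := by rw [dotProduct_comm, c₄]
  have c₅' : p₂ t ⬝ᵥ e₂ t = 0 := by rw [dotProduct_comm, c₅]
  have d₁ : p₂ t ⬝ᵥ e₁ t = e₁ t ⬝ᵥ p₂ t := dotProduct_comm _ _
  have d₂ : p₁ t ⬝ᵥ e₂ t = e₂ t ⬝ᵥ p₁ t := dotProduct_comm _ _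
  have d₃ : p₂ t ⬝ᵥ p₁ t = p₁ t ⬝ᵥ p₂ t := dotProduct_comm _ _
  have c₆' : e₂ t ⬝ᵥ p₁ t = -(e₁ t ⬝ᵥ p₂ t) := by linarith
  refine ⟨((hasDerivAt_dot_aux he₁ he₁).sub_const 1).congr_deriv ?_,
    ((hasDerivAt_dot_aux he₂ he₂).sub_const 1).congr_deriv ?_,
    (hasDerivAt_dot_aux he₁ he₂).congr_deriv ?_,
    (hasDerivAt_dot_aux he₁ hp₁).congr_deriv ?_,
    (hasDerivAt_dot_aux he₂ hp₂).congr_deriv ?_,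
    ((hasDerivAt_dot_aux he₁ hp₂).add (hasDerivAt_dot_aux he₂ hp₁)).congr_deriv ?_⟩ <;>
  · subst heq₁ heq₂ heq₃ heq₄ hl₁₁ hl₁₂ hl₂₁ hl₂₂
    simp only [add_dotProduct, sub_dotProduct, smul_dotProduct, dotProduct_add, dotProduct_sub,
      dotProduct_smul, dotProduct_neg, smul_eq_mul, c₁, c₂, c₃, c₃', c₄, c₄', c₅, c₅', d₁, d₂, d₃,
      c₆']
    linarith
end

section
/- Let Ξ be a real skew-symmetric n×n matrix and κ ∈ ℝ. Suppose e₁, e₂, p₁, p₂ : ℝ → ℝⁿ are differentiable curves which at time t satisfy the constraints ⟨e₁,e₁⟩ = ⟨e₂,e₂⟩ = 1, ⟨e₁,e₂⟩ = ⟨e₁,p₁⟩ = ⟨e₂,p₂⟩ = 0, ⟨e₁,p₂⟩ + ⟨e₂,p₁⟩ = 0, and the V(n,2)-pendulum equations e₁' = p₁ - (1+2κ)⟨e₁,p₂⟩e₂, e₂' = p₂ - (1+2κ)⟨e₂,p₁⟩e₁, p₁' = Ξe₂ + (1+2κ)⟨p₁,e₂⟩p₂ + λ₁₁e₁ + λ₁₂e₂,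 p₂' = -Ξe₁ + (1+2κ)⟨p₂,e₁⟩p₁ + λ₂₁e₁ + λ₂₂e₂, with λ₁₁ = -⟨p₁,p₁⟩ - ⟨e₁,Ξe₂⟩, λ₁₂ = λ₂₁ = -⟨p₁,p₂⟩, λ₂₂ = -⟨p₂,p₂⟩ - ⟨e₁,Ξe₂⟩. Then, with Φ = p₁∧e₁ + p₂∧e₂, at time t one has d/dt(e₁∧e₂) = [Φ, e₁∧e₂] and dΦ/dt = [e₁∧e₂, Ξ]. -/
open Matrix

/-- Along the `V(n,2)`-pendulum flow, with `Φ = p₁∧e₁ + p₂∧e₂`,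
one has `d/dt(e₁∧e₂) = [Φ, e₁∧e₂]` and `dΦ/dt = [e₁∧e₂, Ξ]`. -/
theorem v_n2_pendulum_lie_form (n : ℕ)
    (Ξ : Matrix (Fin n) (Fin n) ℝ) (hΞ : Ξᵀ = -Ξ) (κ : ℝ)
    (e₁ e₂ p₁ p₂ : ℝ → Fin n → ℝ)
    (e₁' e₂' p₁' p₂' : Fin n → ℝ) (t : ℝ)
    (he₁ : HasVecDerivAt e₁ e₁' t) (he₂ : HasVecDerivAt e₂ e₂' t)
    (hp₁ : HasVecDerivAt p₁ p₁' t) (hp₂ : HasVecDerivAt p₂ p₂' t)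
    (c₁ : e₁ t ⬝ᵥ e₁ t = 1) (c₂ : e₂ t ⬝ᵥ e₂ t = 1)
    (c₃ : e₁ t ⬝ᵥ e₂ t = 0) (c₄ : e₁ t ⬝ᵥ p₁ t = 0) (c₅ : e₂ t ⬝ᵥ p₂ t = 0)
    (c₆ : e₁ t ⬝ᵥ p₂ t + e₂ t ⬝ᵥ p₁ t = 0)
    (l₁₁ l₁₂ l₂₁ l₂₂ : ℝ)
    (hl₁₁ : l₁₁ = -(p₁ t ⬝ᵥ p₁ t) - e₁ t ⬝ᵥ Ξ.mulVec (e₂ t))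
    (hl₁₂ : l₁₂ = -(p₁ t ⬝ᵥ p₂ t)) (hl₂₁ : l₂₁ = -(p₁ t ⬝ᵥ p₂ t))
    (hl₂₂ : l₂₂ = -(p₂ t ⬝ᵥ p₂ t) - e₁ t ⬝ᵥ Ξ.mulVec (e₂ t))
    (heq₁ : e₁' = p₁ t - ((1 + 2 * κ) * (e₁ t ⬝ᵥ p₂ t)) • e₂ t)
    (heq₂ : e₂' = p₂ t - ((1 + 2 * κ) * (e₂ t ⬝ᵥ p₁ t)) • e₁ t)
    (heq₃ : p₁' = Ξ.mulVec (e₂ t) + ((1 + 2 * κ) * (p₁ t ⬝ᵥ e₂ t)) • p₂ t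
        + l₁₁ • e₁ t + l₁₂ • e₂ t)
    (heq₄ : p₂' = -Ξ.mulVec (e₁ t) + ((1 + 2 * κ) * (p₂ t ⬝ᵥ e₁ t)) • p₁ t
        + l₂₁ • e₁ t + l₂₂ • e₂ t) :
    HasMatDerivAt (fun s => wedge (e₁ s) (e₂ s))
      ((wedge (p₁ t) (e₁ t) + wedge (p₂ t) (e₂ t)) * wedge (e₁ t) (e₂ t)
        - wedge (e₁ t) (e₂ t) * (wedge (p₁ t) (e₁ t) + wedge (p₂ t) (e₂ t))) t ∧
    HasMatDerivAt (fun s => wedge (p₁ s) (e₁ s) + wedge (p₂ s) (e₂ s))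
      (wedge (e₁ t) (e₂ t) * Ξ - Ξ * wedge (e₁ t) (e₂ t)) t := by
  have d₁ : e₂ t ⬝ᵥ e₁ t = 0 := by rw [dotProduct_comm]; exact c₃
  have d₂ : p₁ t ⬝ᵥ e₁ t = 0 := by rw [dotProduct_comm]; exact c₄
  have d₃ : p₂ t ⬝ᵥ e₂ t = 0 := by rw [dotProduct_comm]; exact c₅
  have d₄ : p₂ t ⬝ᵥ e₁ t = e₁ t ⬝ᵥ p₂ t := dotProduct_comm _ _
  have d₅ : p₁ t ⬝ᵥ e₂ t = - (e₁ t ⬝ᵥ p₂ t) := by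
    rw [dotProduct_comm]; linarith
  have d₆ : e₂ t ⬝ᵥ p₁ t = - (e₁ t ⬝ᵥ p₂ t) := by linarith
  have hv : ∀ v : Fin n → ℝ, v ᵥ* Ξ = - (Ξ *ᵥ v) := by
    intro v
    rw [← mulVec_transpose, hΞ, neg_mulVec]
  constructor
  · intro i j
    have h := ((he₁ i).mul (he₂ j)).sub ((he₂ i).mul (he₁ j))
    refine h.congr_deriv ?_
    simp only [wedge, mul_sub, sub_mul, add_mul, mul_add, vecMulVec_mul_vecMulVec]
    simp [vecMulVec_apply, heq₁, heq₂, c₁, c₂, c₃, c₄, c₅, d₁, d₂, d₃, d₄, d₅, d₆]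
    ring
  · intro i j
    have h := (((hp₁ i).mul (he₁ j)).sub ((he₁ i).mul (hp₁ j))).add
      (((hp₂ i).mul (he₂ j)).sub ((he₂ i).mul (hp₂ j)))
    refine h.congr_deriv ?_
    simp only [wedge, mul_sub, sub_mul, vecMulVec_mul, mul_vecMulVec, hv]
    simp [vecMulVec_apply, heq₁, heq₂, heq₃, heq₄, hl₁₂, hl₂₁, d₄, d₅, d₆]
    ring
end

section
/- Let Ξ be a real skew-symmetric n×n matrix, and let e₁, e₂ : ℝ → ℝⁿ and Φ : ℝ → M_n(ℝ) be differentiable curves such that at time t one has d/dt(e₁∧e₂) = [Φ, e₁∧e₂] and dΦ/dt = [e₁∧e₂, Ξ]. For λ ∈ ℝ define the complex n×n matrices L(λ) = λΦ + i(e₁∧e₂ + λ²Ξ) and A(λ) = Φ + iλΞ. Then d/dt L(λ) = [A(λ), L(λ)] holds at time t for every λ ∈ ℝ. (Lax representation with spectral parameter for the V(n,2)-pendulum.) -/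
open Matrix

/-- A real matrix regarded as a complex one. -/
def cplx {n : ℕ} (M : Matrix (Fin n) (Fin n) ℝ) : Matrix (Fin n) (Fin n) ℂ :=
  M.map Complex.ofReal

/-- the equations `d/dt(e₁∧e₂) = [Φ, e₁∧e₂]`, `dΦ/dt = [e₁∧e₂, Ξ]`
imply the Lax equation `d/dt L(λ) = [A(λ), L(λ)]` for every `λ ∈ ℝ`, where
`L(λ) = λΦ + i(e₁∧e₂ + λ²Ξ)` and `A(λ) = Φ + iλΞ`. -/
theorem v_n2_pendulum_spectral_lax (n : ℕ)
    (Ξ : Matrix (Fin n) (Fin n) ℝ) (hΞ : Ξᵀ = -Ξ)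
    (e₁ e₂ : ℝ → Fin n → ℝ) (Φ : ℝ → Matrix (Fin n) (Fin n) ℝ)
    (W' Φ' : Matrix (Fin n) (Fin n) ℝ) (t : ℝ)
    (hW : HasMatDerivAt (fun s => wedge (e₁ s) (e₂ s)) W' t)
    (hΦ : HasMatDerivAt Φ Φ' t)
    (heqW : W' = Φ t * wedge (e₁ t) (e₂ t) - wedge (e₁ t) (e₂ t) * Φ t)
    (heqΦ : Φ' = wedge (e₁ t) (e₂ t) * Ξ - Ξ * wedge (e₁ t) (e₂ t)) :
    ∀ lam : ℝ,
      HasMatDerivAt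
        (fun s => (lam : ℂ) • cplx (Φ s)
          + Complex.I • (cplx (wedge (e₁ s) (e₂ s)) + ((lam : ℂ) ^ 2) • cplx Ξ))
        ((cplx (Φ t) + (Complex.I * lam) • cplx Ξ)
            * ((lam : ℂ) • cplx (Φ t)
              + Complex.I • (cplx (wedge (e₁ t) (e₂ t)) + ((lam : ℂ) ^ 2) • cplx Ξ))
          - ((lam : ℂ) • cplx (Φ t)
              + Complex.I • (cplx (wedge (e₁ t) (e₂ t)) + ((lam : ℂ) ^ 2) • cplx Ξ))
            * (cplx (Φ t) + (Complex.I * lam) • cplx Ξ)) t := by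
  intro lam
  have hmul : ∀ A B : Matrix (Fin n) (Fin n) ℝ, cplx (A * B) = cplx A * cplx B := by
    intro A B
    exact Matrix.map_mul (f := Complex.ofRealHom)
  have hsub : ∀ A B : Matrix (Fin n) (Fin n) ℝ, cplx (A - B) = cplx A - cplx B := by
    intro A B
    ext i j
    simp [cplx]
  have key : (cplx (Φ t) + (Complex.I * lam) • cplx Ξ)
            * ((lam : ℂ) • cplx (Φ t)
              + Complex.I • (cplx (wedge (e₁ t) (e₂ t)) + ((lam : ℂ) ^ 2) • cplx Ξ))
          - ((lam : ℂ) • cplx (Φ t)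
              + Complex.I • (cplx (wedge (e₁ t) (e₂ t)) + ((lam : ℂ) ^ 2) • cplx Ξ))
            * (cplx (Φ t) + (Complex.I * lam) • cplx Ξ)
      = (lam : ℂ) • cplx Φ' + Complex.I • cplx W' := by
    rw [heqW, heqΦ]
    simp only [hsub, hmul]
    generalize cplx (Φ t) = P
    generalize cplx (wedge (e₁ t) (e₂ t)) = W
    generalize cplx Ξ = X
    simp only [add_mul, mul_add, smul_add, smul_sub, Matrix.smul_mul, Matrix.mul_smul, smul_smul]
    match_scalars <;> ring_nf <;> simp
  rw [key]
  intro i j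
  have h1 := ((hΦ i j).ofReal_comp).const_mul (lam : ℂ)
  have h2 := (((hW i j).ofReal_comp).add_const (((lam : ℂ) ^ 2) * (Ξ i j : ℂ))).const_mul Complex.I
  exact h1.add h2
end

section
/- Let B = diag(b₁,...,bₙ) be a real diagonal n×n matrix and κ ∈ ℝ. Suppose X, P : ℝ → M_{n,r}(ℝ) are differentiable curves which at time t satisfy the constraints XᵀX = I_r, XᵀP + PᵀX = 0, and the equations X' = P - (1+2κ)XPᵀX, P' = (1+2κ)PXᵀP - B²X + 2BXXᵀBX + XΛ, where Λ = XᵀB²X - 2XᵀBXXᵀBX - PᵀP. Then at time t one has d/dt(XᵀX) = 0 and d/dt(XᵀP + PᵀX) = 0; i.e., this Lagrange multiplier Λ makes the flow of the fourth-degree potential system tangent to the constraint variety. -/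
open Matrix

theorem HasMatDerivAt.tmul {n r : ℕ} {X Y : ℝ → Matrix (Fin n) (Fin r) ℝ}
    {X' Y' : Matrix (Fin n) (Fin r) ℝ} {t : ℝ}
    (hX : HasMatDerivAt X X' t) (hY : HasMatDerivAt Y Y' t) :
    HasMatDerivAt (fun s => (X s)ᵀ * Y s) (X'ᵀ * Y t + (X t)ᵀ * Y') t := by
  intro i j
  simp only [Matrix.mul_apply, Matrix.add_apply, Matrix.transpose_apply, ← Finset.sum_add_distrib]
  exact HasDerivAt.fun_sum fun k _ => (hX k i).mul (hY k j)

/-- The Lagrange multiplier `Λ = XᵀB²X - 2XᵀBXXᵀBX - PᵀP` makes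
the flow of the fourth-degree potential system on `V(n,r)` tangent to the
constraint variety `XᵀX = I_r`, `XᵀP + PᵀX = 0`. -/
theorem fourth_degree_constraints_preserved (n r : ℕ)
    (b : Fin n → ℝ) (B : Matrix (Fin n) (Fin n) ℝ) (hB : B = diagonal b) (κ : ℝ)
    (X P : ℝ → Matrix (Fin n) (Fin r) ℝ)
    (X' P' : Matrix (Fin n) (Fin r) ℝ) (t : ℝ)
    (hX : HasMatDerivAt X X' t) (hP : HasMatDerivAt P P' t)
    (hc1 : (X t)ᵀ * X t = 1)
    (hc2 : (X t)ᵀ * P t + (P t)ᵀ * X t = 0)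
    (Λ : Matrix (Fin r) (Fin r) ℝ)
    (hΛ : Λ = (X t)ᵀ * (B * B) * X t
        - (2 : ℝ) • ((X t)ᵀ * B * X t * ((X t)ᵀ * B * X t)) - (P t)ᵀ * P t)
    (heqX : X' = P t - (1 + 2 * κ) • (X t * ((P t)ᵀ * X t)))
    (heqP : P' = (1 + 2 * κ) • (P t * ((X t)ᵀ * P t)) - B * B * X t
        + (2 : ℝ) • (B * X t * ((X t)ᵀ * B * X t)) + X t * Λ) :
    HasMatDerivAt (fun s => (X s)ᵀ * X s) 0 t ∧
      HasMatDerivAt (fun s => (X s)ᵀ * P s + (P s)ᵀ * X s) 0 t := by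
  have hS : (P t)ᵀ * X t = -((X t)ᵀ * P t) := eq_neg_of_add_eq_zero_right hc2
  have c1 : ∀ M : Matrix (Fin r) (Fin r) ℝ, (X t)ᵀ * (X t * M) = M := fun M => by
    rw [← Matrix.mul_assoc, hc1, Matrix.one_mul]
  have e1 : (X t)ᵀ * X' = (X t)ᵀ * P t + (1 + 2 * κ) • ((X t)ᵀ * P t) := by
    rw [heqX, hS, Matrix.mul_sub, Matrix.mul_smul, c1, smul_neg, sub_neg_eq_add]
  have e1t : X'ᵀ * X t = -((X t)ᵀ * X') := by
    have h := congrArg Matrix.transpose e1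
    simp only [transpose_mul, transpose_add, transpose_smul, transpose_transpose] at h
    rw [h, e1, hS, smul_neg, neg_add]
  have e2 : X'ᵀ * P t + (X t)ᵀ * P' = 0 := by
    have h1 : X'ᵀ * P t = (P t)ᵀ * P t
        - (1 + 2 * κ) • (((X t)ᵀ * P t) * ((X t)ᵀ * P t)) := by
      rw [heqX]
      simp only [transpose_mul, transpose_sub, transpose_smul, transpose_transpose,
        Matrix.sub_mul, Matrix.smul_mul, Matrix.mul_assoc]
    have h2 : (X t)ᵀ * P' = (1 + 2 * κ) • (((X t)ᵀ * P t) * ((X t)ᵀ * P t))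
        - (P t)ᵀ * P t := by
      rw [heqP, Matrix.mul_add, c1, hΛ]
      simp only [Matrix.mul_add, Matrix.mul_sub, Matrix.mul_smul, Matrix.mul_assoc]
      abel
    rw [h1, h2]
    abel
  have e3 : P'ᵀ * X t + (P t)ᵀ * X' = 0 := by
    have h := congrArg Matrix.transpose e2
    simp only [transpose_mul, transpose_add, transpose_transpose, transpose_zero] at h
    rw [← h, add_comm]
  refine ⟨?_, ?_⟩
  · have h := hX.tmul hX
    rwa [e1t, neg_add_cancel] at h
  · have h := hX.tmul hP
    have h' := hP.tmul hX
    rw [e2] at h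
    rw [e3] at h'
    intro i j
    simpa using (h i j).fun_add (h' i j)
end

section
/- Let B = diag(b₁,...,bₙ) and κ ∈ ℝ. Suppose X, P : ℝ → M_{n,r}(ℝ) are differentiable curves which at time t satisfy XᵀX = I_r, XᵀP + PᵀX = 0, and the equations X' = P - (1+2κ)XPᵀX, P' = (1+2κ)PXᵀP - B²X + 2BXXᵀBX + XΛ with Λ = XᵀB²X - 2XᵀBXXᵀBX - PᵀP. Then the SO(r)-momentum map Ψ = XᵀP - PᵀX satisfies dΨ/dt = 0 at time t; in particular the set {XᵀP = PᵀX = 0} is invariant under the flow. -/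
open Matrix

/-- Along the flow of the fourth-degree potential system on
`V(n,r)`, the `SO(r)`-momentum map `Ψ = XᵀP - PᵀX` is conserved: `dΨ/dt = 0`. -/
theorem fourth_degree_momentum_conserved (n r : ℕ)
    (b : Fin n → ℝ) (B : Matrix (Fin n) (Fin n) ℝ) (hB : B = diagonal b) (κ : ℝ)
    (X P : ℝ → Matrix (Fin n) (Fin r) ℝ)
    (X' P' : Matrix (Fin n) (Fin r) ℝ) (t : ℝ)
    (hX : HasMatDerivAt X X' t) (hP : HasMatDerivAt P P' t)
    (hc1 : (X t)ᵀ * X t = 1)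
    (hc2 : (X t)ᵀ * P t + (P t)ᵀ * X t = 0)
    (Λ : Matrix (Fin r) (Fin r) ℝ)
    (hΛ : Λ = (X t)ᵀ * (B * B) * X t
        - (2 : ℝ) • ((X t)ᵀ * B * X t * ((X t)ᵀ * B * X t)) - (P t)ᵀ * P t)
    (heqX : X' = P t - (1 + 2 * κ) • (X t * ((P t)ᵀ * X t)))
    (heqP : P' = (1 + 2 * κ) • (P t * ((X t)ᵀ * P t)) - B * B * X t
        + (2 : ℝ) • (B * X t * ((X t)ᵀ * B * X t)) + X t * Λ) :
    HasMatDerivAt (fun s => (X s)ᵀ * P s - (P s)ᵀ * X s) 0 t := by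
  have hD : X'ᵀ * P t + (X t)ᵀ * P' = 0 := by
    have hXX : ∀ M : Matrix (Fin r) (Fin r) ℝ, (X t)ᵀ * (X t * M) = M := by
      intro M
      rw [← Matrix.mul_assoc, hc1, Matrix.one_mul]
    rw [heqX, heqP, hΛ]
    simp only [transpose_sub, transpose_smul, transpose_mul, transpose_transpose,
      Matrix.sub_mul, Matrix.mul_add, Matrix.mul_sub, Matrix.smul_mul, Matrix.mul_smul,
      hXX, Matrix.mul_assoc]
    abel
  have hD2 : P'ᵀ * X t + (P t)ᵀ * X' = 0 := by
    have h := congrArg transpose hD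
    simp only [transpose_add, transpose_mul, transpose_transpose, transpose_zero] at h
    rw [add_comm]
    exact h
  intro i j
  have h1 : HasDerivAt (fun s => ((X s)ᵀ * P s) i j) ((X'ᵀ * P t + (X t)ᵀ * P') i j) t := by
    simp only [Matrix.add_apply, Matrix.mul_apply, transpose_apply, ← Finset.sum_add_distrib]
    exact HasDerivAt.fun_sum fun k _ => (hX k i).mul (hP k j)
  have h2 : HasDerivAt (fun s => ((P s)ᵀ * X s) i j) ((P'ᵀ * X t + (P t)ᵀ * X') i j) t := by
    simp only [Matrix.add_apply, Matrix.mul_apply, transpose_apply, ← Finset.sum_add_distrib]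
    exact HasDerivAt.fun_sum fun k _ => (hP k i).mul (hX k j)
  rw [hD] at h1
  rw [hD2] at h2
  simpa using h1.fun_sub h2
end

section
/- Let B = diag(b₁,...,bₙ) and κ ∈ ℝ. Suppose X, P : ℝ → M_{n,r}(ℝ) are differentiable curves which at time t satisfy XᵀX = I_r, XᵀP + PᵀX = 0, and the equations X' = P - (1+2κ)XPᵀX, P' = (1+2κ)PXᵀP - B²X + 2BXXᵀBX + XΛ with Λ = XᵀB²X - 2XᵀBXXᵀBX - PᵀP. Then the SO(n)-momentum map Φ = PXᵀ - XPᵀ satisfies, at time t, dΦ/dt = ½[B, (I_n - 2XXᵀ)B(I_n - 2XXᵀ)]. -/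
open Matrix

/-- Along the flow of the fourth-degree potential system on
`V(n,r)`, the `SO(n)`-momentum map `Φ = PXᵀ - XPᵀ` satisfies
`dΦ/dt = ½[B, (I - 2XXᵀ)B(I - 2XXᵀ)]`. -/
theorem fourth_degree_phi_evolution (n r : ℕ)
    (b : Fin n → ℝ) (B : Matrix (Fin n) (Fin n) ℝ) (hB : B = diagonal b) (κ : ℝ)
    (X P : ℝ → Matrix (Fin n) (Fin r) ℝ)
    (X' P' : Matrix (Fin n) (Fin r) ℝ) (t : ℝ)
    (hX : HasMatDerivAt X X' t) (hP : HasMatDerivAt P P' t)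
    (hc1 : (X t)ᵀ * X t = 1)
    (hc2 : (X t)ᵀ * P t + (P t)ᵀ * X t = 0)
    (Λ : Matrix (Fin r) (Fin r) ℝ)
    (hΛ : Λ = (X t)ᵀ * (B * B) * X t
        - (2 : ℝ) • ((X t)ᵀ * B * X t * ((X t)ᵀ * B * X t)) - (P t)ᵀ * P t)
    (heqX : X' = P t - (1 + 2 * κ) • (X t * ((P t)ᵀ * X t)))
    (heqP : P' = (1 + 2 * κ) • (P t * ((X t)ᵀ * P t)) - B * B * X t
        + (2 : ℝ) • (B * X t * ((X t)ᵀ * B * X t)) + X t * Λ) :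
    HasMatDerivAt (fun s => P s * (X s)ᵀ - X s * (P s)ᵀ)
      ((1 / 2 : ℝ) •
        (B * ((1 - (2 : ℝ) • (X t * (X t)ᵀ)) * B * (1 - (2 : ℝ) • (X t * (X t)ᵀ)))
          - ((1 - (2 : ℝ) • (X t * (X t)ᵀ)) * B * (1 - (2 : ℝ) • (X t * (X t)ᵀ))) * B))
      t := by
  have hBt : Bᵀ = B := by rw [hB, diagonal_transpose]
  have hder : HasMatDerivAt (fun s => P s * (X s)ᵀ - X s * (P s)ᵀ)
      ((P' * (X t)ᵀ + P t * X'ᵀ) - (X' * (P t)ᵀ + X t * P'ᵀ)) t := by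
    intro i j
    simp only [Matrix.sub_apply, Matrix.add_apply, Matrix.mul_apply, Matrix.transpose_apply,
      ← Finset.sum_add_distrib]
    exact (HasDerivAt.fun_sum fun k _ => (hP i k).mul (hX j k)).sub
      (HasDerivAt.fun_sum fun k _ => (hX i k).mul (hP j k))
  convert hder using 1
  rw [heqP, heqX, hΛ]
  generalize X t = Y
  generalize P t = Q
  simp only [Matrix.transpose_add, Matrix.transpose_sub, Matrix.transpose_smul,
    Matrix.transpose_mul, Matrix.transpose_transpose, hBt, Matrix.mul_add, Matrix.add_mul,
    Matrix.mul_sub, Matrix.sub_mul, Matrix.mul_smul, Matrix.smul_mul, Matrix.mul_assoc,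
    Matrix.mul_one, Matrix.one_mul]
  module
end

section
/- Let B = diag(b₁,...,bₙ) and κ ∈ ℝ. Suppose X, P : ℝ → M_{n,r}(ℝ) are differentiable curves which at time t satisfy XᵀX = I_r, XᵀP = 0 and PᵀX = 0, together with X' = P - (1+2κ)XPᵀX. Then the curve M = (I_n - 2XXᵀ)B(I_n - 2XXᵀ) satisfies, at time t, dM/dt = 2[Φ, M], where Φ = PXᵀ - XPᵀ. -/
open Matrix

theorem HasMatDerivAt.matMul {n m k : ℕ} {F : ℝ → Matrix (Fin n) (Fin m) ℝ}
    {G : ℝ → Matrix (Fin m) (Fin k) ℝ} {F' : Matrix (Fin n) (Fin m) ℝ}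
    {G' : Matrix (Fin m) (Fin k) ℝ} {t : ℝ}
    (hF : HasMatDerivAt F F' t) (hG : HasMatDerivAt G G' t) :
    HasMatDerivAt (fun s => F s * G s) (F' * G t + F t * G') t := by
  intro i j
  simp only [Matrix.mul_apply, Matrix.add_apply, ← Finset.sum_add_distrib]
  exact HasDerivAt.fun_sum fun l _ => (hF i l).mul (hG l j)

/-- On the invariant set `XᵀP = PᵀX = 0`, with
`X' = P - (1+2κ)XPᵀX`, the curve `M = (I - 2XXᵀ)B(I - 2XXᵀ)` satisfies
`dM/dt = 2[Φ, M]`, where `Φ = PXᵀ - XPᵀ`. -/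
theorem fourth_degree_M_evolution (n r : ℕ)
    (b : Fin n → ℝ) (B : Matrix (Fin n) (Fin n) ℝ) (hB : B = diagonal b) (κ : ℝ)
    (X P : ℝ → Matrix (Fin n) (Fin r) ℝ)
    (X' : Matrix (Fin n) (Fin r) ℝ) (t : ℝ)
    (hX : HasMatDerivAt X X' t)
    (hc1 : (X t)ᵀ * X t = 1)
    (hc2 : (X t)ᵀ * P t = 0) (hc3 : (P t)ᵀ * X t = 0)
    (heqX : X' = P t - (1 + 2 * κ) • (X t * ((P t)ᵀ * X t))) :
    HasMatDerivAt
      (fun s => (1 - (2 : ℝ) • (X s * (X s)ᵀ)) * B * (1 - (2 : ℝ) • (X s * (X s)ᵀ)))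
      ((2 : ℝ) •
        ((P t * (X t)ᵀ - X t * (P t)ᵀ)
            * ((1 - (2 : ℝ) • (X t * (X t)ᵀ)) * B * (1 - (2 : ℝ) • (X t * (X t)ᵀ)))
          - ((1 - (2 : ℝ) • (X t * (X t)ᵀ)) * B * (1 - (2 : ℝ) • (X t * (X t)ᵀ)))
            * (P t * (X t)ᵀ - X t * (P t)ᵀ))) t := by
  have hX' : X' = P t := by rw [heqX, hc3]; simp
  subst hX'
  have hXT : HasMatDerivAt (fun s => (X s)ᵀ) (P t)ᵀ t := fun i j => hX j i
  have hS : HasMatDerivAt (fun s => 1 - (2 : ℝ) • (X s * (X s)ᵀ))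
      (-((2 : ℝ) • (P t * (X t)ᵀ + X t * (P t)ᵀ))) t := by
    intro i j
    exact (((hX.matMul hXT) i j).const_mul (2 : ℝ)).const_sub ((1 : Matrix (Fin n) (Fin n) ℝ) i j)
  have hBc : HasMatDerivAt (fun _ : ℝ => B) 0 t := fun i j => hasDerivAt_const t (B i j)
  have h := (hS.matMul hBc).matMul hS
  have e1 : (P t * (X t)ᵀ - X t * (P t)ᵀ) * (1 - (2 : ℝ) • (X t * (X t)ᵀ))
      = -(P t * (X t)ᵀ + X t * (P t)ᵀ) := by
    have a1 : P t * (X t)ᵀ * (X t * (X t)ᵀ) = P t * (X t)ᵀ := by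
      rw [Matrix.mul_assoc, ← Matrix.mul_assoc (X t)ᵀ, hc1, Matrix.one_mul]
    have a2 : X t * (P t)ᵀ * (X t * (X t)ᵀ) = 0 := by
      rw [Matrix.mul_assoc, ← Matrix.mul_assoc (P t)ᵀ, hc3, Matrix.zero_mul, Matrix.mul_zero]
    rw [Matrix.mul_sub, Matrix.mul_one, Matrix.mul_smul, Matrix.sub_mul, a1, a2]
    module
  have e2 : (1 - (2 : ℝ) • (X t * (X t)ᵀ)) * (P t * (X t)ᵀ - X t * (P t)ᵀ)
      = P t * (X t)ᵀ + X t * (P t)ᵀ := by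
    have a1 : X t * (X t)ᵀ * (P t * (X t)ᵀ) = 0 := by
      rw [Matrix.mul_assoc, ← Matrix.mul_assoc (X t)ᵀ, hc2, Matrix.zero_mul, Matrix.mul_zero]
    have a2 : X t * (X t)ᵀ * (X t * (P t)ᵀ) = X t * (P t)ᵀ := by
      rw [Matrix.mul_assoc, ← Matrix.mul_assoc (X t)ᵀ, hc1, Matrix.one_mul]
    rw [Matrix.sub_mul, Matrix.one_mul, Matrix.smul_mul, Matrix.mul_sub, a1, a2]
    module
  convert h using 1
  rw [Matrix.mul_assoc _ _ (P t * (X t)ᵀ - X t * (P t)ᵀ), e2, ← Matrix.mul_assoc,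
    ← Matrix.mul_assoc, e1]
  simp only [Matrix.mul_zero, add_zero, Matrix.neg_mul, Matrix.mul_neg, Matrix.smul_mul,
    Matrix.mul_smul]
  module
end

section
/- Let n ≥ r ≥ 1, let X be a real n×r matrix with XᵀX = I_r, let B = diag(b₁,...,bₙ), and let J = diag(-I_r, I_{n-r}) (the diagonal n×n matrix with first r diagonal entries -1 and the rest +1). Then -½ tr((I_n - 2XXᵀ) J B J (I_n - 2XXᵀ) B) = 2 tr(XᵀB²X) - 2 tr(XᵀBXXᵀBX) - ½ tr(B²). In particular, the pull-back of the generalized Neumann potential W(g) = ⟨Ad_g(B), B⟩ on the Cartan model of the Grassmannian under the map π(X) followed by θ(π(X)) = (I_n - 2XXᵀ)J equals, up to an additive constant, four times the fourth-degree potential ½tr(XᵀB²X) - ½tr(XᵀBXXᵀBX). -/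
open Matrix

/-- For `X` with `XᵀX = I_r`, `B = diag(b₁,…,bₙ)` and
`J = diag(-I_r, I_{n-r})`, the pull-back of the generalized Neumann potential:
`-½ tr((I - 2XXᵀ) J B J (I - 2XXᵀ) B) = 2tr(XᵀB²X) - 2tr(XᵀBXXᵀBX) - ½tr(B²)`. -/
theorem neumann_potential_pullback (n r : ℕ) (hr : 1 ≤ r) (hnr : r ≤ n)
    (X : Matrix (Fin n) (Fin r) ℝ) (hX : Xᵀ * X = 1)
    (b : Fin n → ℝ) (B : Matrix (Fin n) (Fin n) ℝ) (hB : B = diagonal b)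
    (J : Matrix (Fin n) (Fin n) ℝ)
    (hJ : J = diagonal (fun i : Fin n => if (i : ℕ) < r then (-1 : ℝ) else 1)) :
    -(1 / 2) *
        ((1 - (2 : ℝ) • (X * Xᵀ)) * J * B * J * (1 - (2 : ℝ) • (X * Xᵀ)) * B).trace
      = 2 * (Xᵀ * (B * B) * X).trace
        - 2 * (Xᵀ * B * X * (Xᵀ * B * X)).trace
        - (1 / 2) * (B * B).trace := by
  have hJBJ : J * B * J = B := by
    rw [hB, hJ, diagonal_mul_diagonal, diagonal_mul_diagonal]
    congr 1
    funext i
    split_ifs <;> ring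
  have h1 : (1 - (2 : ℝ) • (X * Xᵀ)) * J * B * J * (1 - (2 : ℝ) • (X * Xᵀ)) * B
      = (1 - (2 : ℝ) • (X * Xᵀ)) * B * (1 - (2 : ℝ) • (X * Xᵀ)) * B := by
    rw [Matrix.mul_assoc (1 - (2 : ℝ) • (X * Xᵀ)) J B,
      Matrix.mul_assoc (1 - (2 : ℝ) • (X * Xᵀ)) (J * B) J, hJBJ]
  have h2 : (Xᵀ * (B * B) * X).trace = (X * Xᵀ * (B * B)).trace := by
    rw [Matrix.trace_mul_comm, ← Matrix.mul_assoc X]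
  have h3 : (Xᵀ * B * X * (Xᵀ * B * X)).trace = (X * Xᵀ * B * (X * Xᵀ) * B).trace := by
    rw [← Matrix.mul_assoc (Xᵀ * B * X), Matrix.trace_mul_comm]
    simp only [Matrix.mul_assoc]
  have h4 : (B * (X * Xᵀ) * B).trace = (X * Xᵀ * (B * B)).trace := by
    rw [Matrix.mul_assoc, Matrix.trace_mul_comm, Matrix.mul_assoc]
  rw [h1, h2, h3]
  generalize X * Xᵀ = P at *
  have h5 : (1 - (2 : ℝ) • P) * B * (1 - (2 : ℝ) • P) * B
      = B * B - (2 : ℝ) • (P * (B * B)) - (2 : ℝ) • (B * P * B)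
        + (4 : ℝ) • (P * B * P * B) := by
    simp only [sub_mul, mul_sub, one_mul, mul_one, smul_mul_assoc, mul_smul_comm, mul_assoc,
      smul_sub, smul_smul]
    module
  rw [h5]
  simp only [trace_add, trace_sub, trace_smul, h4, smul_eq_mul]
  ring
end
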